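/- Let h = h(t,z) be a smooth solution of the heat equation ∂ₜh = ∂_z²h on [0,∞) × [0,∞) with h(t,0) = 0 for all t ≥ 0. Define h̃(t,z) = ∂_z h(t,z) + (z/(2(1+t))) h(t,z) and H(t,z) = h̃(t,z) + (z/(2(1+t))) ∫₀^z h̃(t,r) dr. Then: (i) h̃ satisfies (∂ₜ − ∂_z² + 1/(1+t)) h̃ = 0 on (0,∞) × (0,∞) with ∂_z h̃(t,0) = 0; and (ii) H satisfies (∂ₜ − ∂_z² + 2/(1+t)) H = 0 on (0,∞) × (0,∞) with ∂_z H(t,0) = 0. -/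

import Mathlib

open MeasureTheory Filter Set

noncomputable section

/-- The first linearly-good unknown `h̃ = ∂_z h + (z/(2(1+t))) h`. -/
def htilde (h : ℝ → ℝ → ℝ) : ℝ → ℝ → ℝ :=
  fun t z => deriv (h t) z + z / (2 * (1 + t)) * h t z

/-- The second linearly-good unknown `H = h̃ + (z/(2(1+t))) ∫₀^z h̃(t,r) dr`. -/
def bigH (h : ℝ → ℝ → ℝ) : ℝ → ℝ → ℝ :=
  fun t z => htilde h t z + z / (2 * (1 + t)) * ∫ r in (0 : ℝ)..z, htilde h t r

lemma partials (F : ℝ × ℝ → ℝ) (hF : ContDiff ℝ (⊤ : ℕ∞) F) (v : ℝ × ℝ) :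
    ContDiff ℝ (⊤ : ℕ∞) (fun p => fderiv ℝ F p v) :=
  (hF.fderiv_right (m := (⊤ : ℕ∞)) (by simp)).clm_apply contDiff_const

lemma hasDerivAt_fst_part (F : ℝ × ℝ → ℝ) (hF : ContDiff ℝ (⊤ : ℕ∞) F) (t z : ℝ) :
    HasDerivAt (fun s => F (s, z)) (fderiv ℝ F (t, z) (1, 0)) t := by
  have h1 : HasFDerivAt F (fderiv ℝ F (t, z)) (t, z) :=
    (hF.differentiable (by simp) (t, z)).hasFDerivAt
  exact h1.comp_hasDerivAt t ((hasDerivAt_id t).prodMk (hasDerivAt_const t z))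

lemma hasDerivAt_snd_part (F : ℝ × ℝ → ℝ) (hF : ContDiff ℝ (⊤ : ℕ∞) F) (t z : ℝ) :
    HasDerivAt (fun r => F (t, r)) (fderiv ℝ F (t, z) (0, 1)) z := by
  have h1 : HasFDerivAt F (fderiv ℝ F (t, z)) (t, z) :=
    (hF.differentiable (by simp) (t, z)).hasFDerivAt
  exact h1.comp_hasDerivAt z ((hasDerivAt_const z t).prodMk (hasDerivAt_id z))

lemma partials_symm (F : ℝ × ℝ → ℝ) (hF : ContDiff ℝ (⊤ : ℕ∞) F) (p v w : ℝ × ℝ) :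
    fderiv ℝ (fun p => fderiv ℝ F p v) p w = fderiv ℝ (fun p => fderiv ℝ F p w) p v := by
  have hd : DifferentiableAt ℝ (fderiv ℝ F) p :=
    (hF.fderiv_right (m := (⊤ : ℕ∞)) (by simp)).differentiable (by simp) p
  have key : ∀ v w : ℝ × ℝ, fderiv ℝ (fun p => fderiv ℝ F p v) p w
      = fderiv ℝ (fderiv ℝ F) p w v := by
    intro v w
    have := (hd.hasFDerivAt.clm_apply (hasFDerivAt_const v p)).fderiv
    rw [this]; simp
  rw [key, key]
  exact ((contDiff_infty.1 hF 2).contDiffAt.isSymmSndFDerivAt (by simp)) w v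

lemma param_integral (G Gt : ℝ → ℝ → ℝ) (hG : Continuous fun p : ℝ × ℝ => G p.1 p.2)
    (hGt : Continuous fun p : ℝ × ℝ => Gt p.1 p.2)
    (hd : ∀ t z, HasDerivAt (fun s => G s z) (Gt t z) t) (t z : ℝ) :
    HasDerivAt (fun s => ∫ r in (0 : ℝ)..z, G s r) (∫ r in (0 : ℝ)..z, Gt t r) t := by
  obtain ⟨C, hC⟩ := ((isCompact_closedBall t 1).prod (isCompact_uIcc (a := 0) (b := z))
    ).exists_bound_of_continuousOn hGt.continuousOn
  have c1 : ∀ s, Continuous (G s) := fun s => hG.comp (Continuous.prodMk_right s)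
  have c2 : ∀ s, Continuous (Gt s) := fun s => hGt.comp (Continuous.prodMk_right s)
  refine (intervalIntegral.hasDerivAt_integral_of_dominated_loc_of_deriv_le
    (bound := fun _ => C) (Metric.closedBall_mem_nhds t one_pos)
    (Eventually.of_forall fun s => (c1 s).aestronglyMeasurable)
    ((c1 t).intervalIntegrable _ _) ((c2 t).aestronglyMeasurable) ?_
    intervalIntegrable_const ?_).2
  · exact Eventually.of_forall fun r hr s hs => hC (s, r) ⟨hs, uIoc_subset_uIcc hr⟩
  · exact Eventually.of_forall fun r _ s _ => hd s r

/-- If `h` is a smooth solution of the heat equation on the half-line with Dirichlet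
boundary condition, then `h̃` satisfies `(∂ₜ − ∂_z² + 1/(1+t)) h̃ = 0` with Neumann
boundary condition, and `H` satisfies `(∂ₜ − ∂_z² + 2/(1+t)) H = 0` with Neumann
boundary condition. -/
theorem statement18 (h : ℝ → ℝ → ℝ)
    (hsm : ContDiff ℝ (⊤ : ℕ∞) fun p : ℝ × ℝ => h p.1 p.2)
    (heat : ∀ t ≥ (0 : ℝ), ∀ z ≥ (0 : ℝ),
      deriv (fun s => h s z) t = deriv (deriv (h t)) z)
    (hbc : ∀ t ≥ (0 : ℝ), h t 0 = 0) :
    (∀ t > (0 : ℝ), ∀ z > (0 : ℝ),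
        deriv (fun s => htilde h s z) t - deriv (deriv (htilde h t)) z
          + 1 / (1 + t) * htilde h t z = 0)
      ∧ (∀ t ≥ (0 : ℝ), deriv (htilde h t) 0 = 0)
      ∧ (∀ t > (0 : ℝ), ∀ z > (0 : ℝ),
          deriv (fun s => bigH h s z) t - deriv (deriv (bigH h t)) z
            + 2 / (1 + t) * bigH h t z = 0)
      ∧ (∀ t ≥ (0 : ℝ), deriv (bigH h t) 0 = 0) := by
  set F : ℝ × ℝ → ℝ := fun p => h p.1 p.2 with hFdef
  set Ft : ℝ × ℝ → ℝ := fun p => fderiv ℝ F p (1, 0) with hFt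
  set Fz : ℝ × ℝ → ℝ := fun p => fderiv ℝ F p (0, 1) with hFz
  set Fzz : ℝ × ℝ → ℝ := fun p => fderiv ℝ Fz p (0, 1) with hFzz
  set Ftz : ℝ × ℝ → ℝ := fun p => fderiv ℝ Ft p (0, 1) with hFtz
  have sFt : ContDiff ℝ (⊤ : ℕ∞) Ft := partials F hsm _
  have sFz : ContDiff ℝ (⊤ : ℕ∞) Fz := partials F hsm _
  have sFzz : ContDiff ℝ (⊤ : ℕ∞) Fzz := partials Fz sFz _
  have dt : ∀ t z, HasDerivAt (fun s => h s z) (Ft (t, z)) t := hasDerivAt_fst_part F hsm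
  have dz : ∀ t z, HasDerivAt (h t) (Fz (t, z)) z := hasDerivAt_snd_part F hsm
  have dzz : ∀ t z, HasDerivAt (fun r => Fz (t, r)) (Fzz (t, z)) z := hasDerivAt_snd_part Fz sFz
  have dzzz : ∀ t z, HasDerivAt (fun r => Fzz (t, r)) (fderiv ℝ Fzz (t, z) (0, 1)) z :=
    hasDerivAt_snd_part Fzz sFzz
  have dtz : ∀ t z, HasDerivAt (fun r => Ft (t, r)) (Ftz (t, z)) z := hasDerivAt_snd_part Ft sFt
  have dzt : ∀ t z, HasDerivAt (fun s => Fz (s, z)) (Ftz (t, z)) t := by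
    intro t z
    have := hasDerivAt_fst_part Fz sFz t z
    rwa [hFz, partials_symm F hsm] at this
  have ez : ∀ t, deriv (h t) = fun z => Fz (t, z) := fun t => funext fun z => (dz t z).deriv
  have heat' : ∀ t ≥ (0 : ℝ), ∀ z ≥ (0 : ℝ), Ft (t, z) = Fzz (t, z) := by
    intro t ht z hz
    have := heat t ht z hz
    rwa [(dt t z).deriv, ez, (dzz t z).deriv] at this
  have heat3 : ∀ t ≥ (0 : ℝ), ∀ z > (0 : ℝ), fderiv ℝ Fzz (t, z) (0, 1) = Ftz (t, z) := by
    intro t ht z hz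
    refine (dzzz t z).unique ((dtz t z).congr_of_eventuallyEq ?_)
    filter_upwards [lt_mem_nhds hz] with r hr
    exact (heat' t ht r hr.le).symm
  have bc : ∀ t ≥ (0 : ℝ), Ft (t, 0) = 0 := by
    intro t ht
    have h1 : HasDerivWithinAt (fun s => h s 0) (Ft (t, 0)) (Ici t) t := (dt t 0).hasDerivWithinAt
    have h2 : HasDerivWithinAt (fun s => h s 0) 0 (Ici t) t :=
      (hasDerivWithinAt_const t (Ici t) (0 : ℝ)).congr (fun s hs => hbc s (le_trans ht hs))
        (hbc t ht)
    exact (uniqueDiffWithinAt_Ici t).eq_deriv _ h1 h2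
  -- htilde
  have et : ∀ t z, htilde h t z = Fz (t, z) + z / (2 * (1 + t)) * h t z := by
    intro t z; simp only [htilde, ez]
  have dcz : ∀ t z : ℝ, HasDerivAt (fun z : ℝ => z / (2 * (1 + t))) (1 / (2 * (1 + t))) z :=
    fun t z => (hasDerivAt_id z).div_const _
  have dct : ∀ t > (0 : ℝ), ∀ z : ℝ,
      HasDerivAt (fun s : ℝ => z / (2 * (1 + s))) (- z / (2 * (1 + t) ^ 2)) t := by
    intro t ht z
    have h0 : 2 * (1 + t) ≠ 0 := by positivity
    have := (hasDerivAt_const t z).div (((hasDerivAt_id t).const_add 1).const_mul 2) h0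
    refine this.congr_deriv ?_
    have : 1 + t ≠ 0 := by positivity
    simp only [id]
    field_simp
    ring
  have htz : ∀ t z, HasDerivAt (htilde h t)
      (Fzz (t, z) + (1 / (2 * (1 + t)) * h t z + z / (2 * (1 + t)) * Fz (t, z))) z := by
    intro t z
    rw [show htilde h t = fun z => Fz (t, z) + z / (2 * (1 + t)) * h t z from funext (et t)]
    exact (dzz t z).add ((dcz t z).mul (dz t z))
  have htzz : ∀ t z, HasDerivAt (deriv (htilde h t))
      (fderiv ℝ Fzz (t, z) (0, 1) + (1 / (2 * (1 + t)) * Fz (t, z)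
        + (1 / (2 * (1 + t)) * Fz (t, z) + z / (2 * (1 + t)) * Fzz (t, z)))) z := by
    intro t z
    rw [show deriv (htilde h t) = _ from funext fun z => (htz t z).deriv]
    exact (dzzz t z).add (((dz t z).const_mul _).add ((dcz t z).mul (dzz t z)))
  have htt : ∀ t > (0 : ℝ), ∀ z, HasDerivAt (fun s => htilde h s z)
      (Ftz (t, z) + (- z / (2 * (1 + t) ^ 2) * h t z + z / (2 * (1 + t)) * Ft (t, z))) t := by
    intro t ht z
    rw [show (fun s => htilde h s z) = fun s => Fz (s, z) + z / (2 * (1 + s)) * h s z from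
      funext fun s => et s z]
    exact (dzt t z).add ((dct t ht z).mul (dt t z))
  have hcont : ∀ t, Continuous (htilde h t) := fun t =>
    continuous_iff_continuousAt.2 fun z => (htz t z).continuousAt
  have neu : ∀ t ≥ (0 : ℝ), deriv (htilde h t) 0 = 0 := by
    intro t ht
    rw [(htz t 0).deriv, ← heat' t ht 0 le_rfl, bc t ht, hbc t ht]; simp
  -- integral
  have hI : ∀ t z, HasDerivAt (fun z => ∫ r in (0 : ℝ)..z, htilde h t r) (htilde h t z) z :=
    fun t z => ((hcont t).integral_hasStrictDerivAt 0 z).hasDerivAt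
  have hHz : ∀ t z, HasDerivAt (bigH h t) (deriv (htilde h t) z +
      (1 / (2 * (1 + t)) * (∫ r in (0 : ℝ)..z, htilde h t r)
        + z / (2 * (1 + t)) * htilde h t z)) z := by
    intro t z
    exact ((htz t z).differentiableAt.hasDerivAt).add ((dcz t z).mul (hI t z))
  have hHzz : ∀ t z, HasDerivAt (deriv (bigH h t)) (deriv (deriv (htilde h t)) z +
      (1 / (2 * (1 + t)) * htilde h t z + (1 / (2 * (1 + t)) * htilde h t z
        + z / (2 * (1 + t)) * deriv (htilde h t) z))) z := by
    intro t z
    rw [show deriv (bigH h t) = _ from funext fun z => (hHz t z).deriv]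
    exact ((htzz t z).differentiableAt.hasDerivAt).add (((hI t z).const_mul _).add
      ((dcz t z).mul (htz t z).differentiableAt.hasDerivAt))
  have cF : Continuous F := hsm.continuous
  have ch : ∀ t, Continuous (h t) := fun t =>
    continuous_iff_continuousAt.2 fun z => (dz t z).continuousAt
  have cz : ∀ t, Continuous (fun z => Fz (t, z)) := fun t =>
    continuous_iff_continuousAt.2 fun z => (dzz t z).continuousAt
  have czz : ∀ t, Continuous (fun z => Fzz (t, z)) := fun t =>
    continuous_iff_continuousAt.2 fun z => (dzzz t z).continuousAt
  have eI : ∀ t z, (∫ r in (0 : ℝ)..z, htilde h t r)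
      = h t z - h t 0 + 1 / (2 * (1 + t)) * ∫ r in (0 : ℝ)..z, r * h t r := by
    intro t z
    have h1 : (∫ r in (0 : ℝ)..z, Fz (t, r)) = h t z - h t 0 :=
      intervalIntegral.integral_eq_sub_of_hasDerivAt (fun r _ => dz t r)
        ((cz t).intervalIntegrable _ _)
    have c3 : Continuous fun r : ℝ => 1 / (2 * (1 + t)) * (r * h t r) :=
      continuous_const.mul (continuous_id.mul (ch t))
    rw [← h1, ← intervalIntegral.integral_const_mul, ← intervalIntegral.integral_add
      ((cz t).intervalIntegrable _ _)
      (c3.intervalIntegrable _ _)]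
    refine intervalIntegral.integral_congr fun r _ => ?_
    simp only [et]
    ring
  have hK : ∀ t > (0 : ℝ), ∀ z > (0 : ℝ), HasDerivAt (fun s => ∫ r in (0 : ℝ)..z, r * h s r)
      (z * Fz (t, z) - h t z) t := by
    intro t ht z hz
    have h1 := param_integral (fun s r => r * h s r) (fun s r => r * Ft (s, r))
      (continuous_snd.mul cF) (continuous_snd.mul sFt.continuous)
      (fun s r => (dt s r).const_mul r) t z
    refine h1.congr_deriv ?_
    have h2 : (∫ r in (0 : ℝ)..z, r * Ft (t, r)) = ∫ r in (0 : ℝ)..z, r * Fzz (t, r) := by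
      refine intervalIntegral.integral_congr fun r hr => ?_
      rw [uIcc_of_le hz.le] at hr
      simp only [heat' t ht.le r hr.1]
    have h3 := intervalIntegral.integral_eq_sub_of_hasDerivAt (a := 0) (b := z)
      (f := fun r => r * Fz (t, r) - h t r) (f' := fun r => r * Fzz (t, r))
      (fun r _ => (((hasDerivAt_id r).mul (dzz t r)).sub (dz t r)).congr_deriv (by simp))
      ((continuous_id.mul (czz t)).intervalIntegrable _ _)
    rw [h2, h3, hbc t ht.le]; simp
  have hIt : ∀ t > (0 : ℝ), ∀ z > (0 : ℝ),
      HasDerivAt (fun s => ∫ r in (0 : ℝ)..z, htilde h s r)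
      (Ft (t, z) - Ft (t, 0) + (- 1 / (2 * (1 + t) ^ 2) * (∫ r in (0 : ℝ)..z, r * h t r)
        + 1 / (2 * (1 + t)) * (z * Fz (t, z) - h t z))) t := by
    intro t ht z hz
    rw [show (fun s => ∫ r in (0 : ℝ)..z, htilde h s r) = _ from funext fun s => eI s z]
    exact ((dt t z).sub (dt t 0)).add ((dct t ht 1).mul (hK t ht z hz))
  have part1 : ∀ t > (0 : ℝ), ∀ z > (0 : ℝ),
        deriv (fun s => htilde h s z) t - deriv (deriv (htilde h t)) z
          + 1 / (1 + t) * htilde h t z = 0 := by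
    intro t ht z hz
    rw [(htt t ht z).deriv, (htzz t z).deriv, heat3 t ht.le z hz, heat' t ht.le z hz.le, et]
    have : 1 + t ≠ 0 := by positivity
    field_simp
    ring
  refine ⟨part1, neu, ?_, ?_⟩
  · intro t ht z hz
    have h1 : HasDerivAt (fun s => bigH h s z) _ t :=
      ((htt t ht z).differentiableAt.hasDerivAt).add ((dct t ht z).mul (hIt t ht z hz))
    have p1 := part1 t ht z hz
    rw [h1.deriv, (hHzz t z).deriv]
    have e1 : deriv (fun s => htilde h s z) t = deriv (deriv (htilde h t)) z
          - 1 / (1 + t) * htilde h t z := by linarith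
    rw [e1, (htz t z).deriv]
    simp only [bigH]
    rw [eI, et, bc t ht.le, hbc t ht.le, heat' t ht.le z hz.le]
    have : 1 + t ≠ 0 := by positivity
    field_simp
    ring
  · intro t ht
    rw [(hHz t 0).deriv, neu t ht]; simp
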